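/- If (Y,f) is a transitive finitely presented system, then there exists a transitive Smale space (X,F) and a u-resolving factor map π₊ : X → Y which is one-to-one almost everywhere, i.e., there is a residual subset of Y whose points have a unique π₊-preimage. -/

import Mathlib

open Filter Topology Set

/-- `f` is expansive with expansive constant `c`. -/
def Expansive {X : Type*} [MetricSpace X] (f : Equiv.Perm X) (c : ℝ) : Prop :=
  ∀ p q : X, p ≠ q → ∃ n : ℤ, c < dist ((f ^ n) p) ((f ^ n) q)

/-- The ε-stable set of `x`. -/
def Ws {X : Type*} [MetricSpace X] (f : Equiv.Perm X) (ε : ℝ) (x : X) : Set X :=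
  {y | ∀ n : ℕ, dist ((f ^ (n : ℤ)) x) ((f ^ (n : ℤ)) y) < ε}

/-- The ε-unstable set of `x`. -/
def Wu {X : Type*} [MetricSpace X] (f : Equiv.Perm X) (ε : ℝ) (x : X) : Set X :=
  {y | ∀ n : ℕ, dist ((f ^ (-(n : ℤ))) x) ((f ^ (-(n : ℤ))) y) < ε}

/-- The stable set of `x`. -/
def stableSet {X : Type*} [MetricSpace X] (f : Equiv.Perm X) (x : X) : Set X :=
  {y | Filter.Tendsto (fun n : ℕ => dist ((f ^ (n : ℤ)) x) ((f ^ (n : ℤ)) y))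
    Filter.atTop (nhds 0)}

/-- The unstable set of `x`. -/
def unstableSet {X : Type*} [MetricSpace X] (f : Equiv.Perm X) (x : X) : Set X :=
  {y | Filter.Tendsto (fun n : ℕ => dist ((f ^ (-(n : ℤ))) x) ((f ^ (-(n : ℤ))) y))
    Filter.atTop (nhds 0)}

/-- Canonical coordinates: for all sufficiently small ε > 0 there is δ > 0 such that
points at distance < δ have a unique bracket `[x,y] = W^s_ε(x) ∩ W^u_ε(y)`. -/
def CanonicalCoords {X : Type*} [MetricSpace X] (f : Equiv.Perm X) : Prop :=
  ∃ ε₀ > 0, ∀ ε : ℝ, 0 < ε → ε ≤ ε₀ → ∃ δ > 0, ∀ x y : X, dist x y < δ →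
    ∃! z, z ∈ Ws f ε x ∩ Wu f ε y

/-- A Smale space: an expansive homeomorphism with canonical coordinates. -/
def IsSmale {X : Type*} [MetricSpace X] (f : Equiv.Perm X) : Prop :=
  Continuous (⇑f) ∧ Continuous (⇑f.symm) ∧ (∃ c > 0, Expansive f c) ∧ CanonicalCoords f

/-- Topological transitivity. -/
def TopTransitive {X : Type*} [MetricSpace X] (f : Equiv.Perm X) : Prop :=
  ∀ U V : Set X, IsOpen U → IsOpen V → U.Nonempty → V.Nonempty →
    ∃ n : ℕ, ((f ^ (n : ℤ)) ⁻¹' U ∩ V).Nonempty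

/-- A periodic point of `f`. -/
def IsPeriodicPoint {X : Type*} [MetricSpace X] (f : Equiv.Perm X) (p : X) : Prop :=
  ∃ N : ℕ, 0 < N ∧ (f ^ (N : ℤ)) p = p

/-- A factor map (surjective continuous semiconjugacy). -/
def IsFactorMap {X Y : Type*} [MetricSpace X] [MetricSpace Y]
    (F : Equiv.Perm X) (f : Equiv.Perm Y) (π : X → Y) : Prop :=
  Continuous π ∧ Function.Surjective π ∧ ∀ x, π (F x) = f (π x)

/-- A map is u-resolving if it is injective on unstable sets. -/
def UResolving {X Y : Type*} [MetricSpace X] (F : Equiv.Perm X) (π : X → Y) : Prop :=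
  ∀ x : X, Set.InjOn π (unstableSet F x)

/-- A map is s-resolving if it is injective on stable sets. -/
def SResolving {X Y : Type*} [MetricSpace X] (F : Equiv.Perm X) (π : X → Y) : Prop :=
  ∀ x : X, Set.InjOn π (stableSet F x)

/-- The shift map on bi-infinite sequences. -/
def shiftE (A : Type*) : Equiv.Perm (ℤ → A) where
  toFun x i := x (i + 1)
  invFun x i := x (i - 1)
  left_inv x := funext fun i => congrArg x (by ring)
  right_inv x := funext fun i => congrArg x (by ring)

/-- The word `w` occurs in the sequence `x`. -/
def OccursIn {A : Type*} {k : ℕ} (w : Fin k → A) (x : ℤ → A) : Prop :=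
  ∃ i : ℤ, ∀ j : Fin k, x (i + (j : ℤ)) = w j

/-- A subshift of finite type: the sequences avoiding a finite set of forbidden words. -/
def IsSFT {A : Type*} (S : Set (ℤ → A)) : Prop :=
  ∃ Fw : Set ((k : ℕ) × (Fin k → A)), Fw.Finite ∧
    S = {x | ∀ w ∈ Fw, ¬ OccursIn w.2 x}

/-- A one-step SFT (vertex shift) with transition rule `T`. -/
def IsOneStepSFTFor {A : Type*} (T : A → A → Prop) (S : Set (ℤ → A)) : Prop :=
  S = {x | ∀ i : ℤ, T (x i) (x (i + 1))}

/-- `S` is invariant under the shift and its inverse. -/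
def ShiftInvariant {A : Type*} (S : Set (ℤ → A)) : Prop :=
  (∀ x ∈ S, shiftE A x ∈ S) ∧ (∀ x ∈ S, (shiftE A).symm x ∈ S)

/-- A factor map from the subshift `(S, σ)` onto the system `(Y, f)`. -/
def IsSubshiftFactorMap {A Y : Type*} [TopologicalSpace A] [MetricSpace Y]
    (S : Set (ℤ → A)) (f : Equiv.Perm Y) (φ : (ℤ → A) → Y) : Prop :=
  ContinuousOn φ S ∧ φ '' S = Set.univ ∧ ∀ x ∈ S, φ (shiftE A x) = f (φ x)

/-- Topological transitivity of the shift restricted to `S`. -/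
def SubshiftTransitive {A : Type*} [TopologicalSpace A] (S : Set (ℤ → A)) : Prop :=
  ∀ U V : Set (ℤ → A), IsOpen U → IsOpen V → (U ∩ S).Nonempty → (V ∩ S).Nonempty →
    ∃ n : ℕ, (((shiftE A) ^ (n : ℤ)) ⁻¹' U ∩ V ∩ S).Nonempty

/-- The stable set of `t` in the subshift `S`: points eventually agreeing with `t`. -/
def shiftStable {A : Type*} (S : Set (ℤ → A)) (t : ℤ → A) : Set (ℤ → A) :=
  {t' ∈ S | ∃ N : ℤ, ∀ i ≥ N, t' i = t i}

/-- A finitely presented system: an expansive system that is a factor of an SFT. -/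
def FinitelyPresented {Y : Type*} [MetricSpace Y] (f : Equiv.Perm Y) : Prop :=
  Continuous (⇑f) ∧ Continuous (⇑f.symm) ∧ (∃ c > 0, Expansive f c) ∧
  ∃ (N : ℕ) (S : Set (ℤ → Fin N)), IsSFT S ∧ ShiftInvariant S ∧ S.Nonempty ∧
    ∃ φ : (ℤ → Fin N) → Y, IsSubshiftFactorMap S f φ

/-!
Call a point `y₀` fiber-stable if nearby points have symbolic preimages in the same cells; the
points minimizing the number of these cells are such. On the points whose backward orbit accumulates
at `y₀`, a residual set by transitivity, replace the topology of `Y` by a finer uniformity: two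
orbits are close if, over a long window of times, they stay close in `Y` and the same cells are
reached by symbolic points shadowing their pasts. The Smale space is the completion.

A symbolic point reaching the cell of a nearby orbit can be spliced with the future of that orbit,
which gives brackets. The cells reached from the past evolve deterministically along close orbits,
so two points of one fiber that are once close in `X` remain so in forward time: the projection is
u-resolving. Finally, each visit to `y₀` determines the reachable cells from the orbit alone, so on
the residual set the finer uniformity induces the topology of `Y` (though not its uniformity). Hence
transitivity lifts, and a sequence in this set whose images converge in `Y` to a point of the set
converges in `X` to that same point: fibers over the residual set are singletons.
-/

section Iterates

variable {X Y : Type*}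

theorem zpow_apply_zpow_apply (f : Equiv.Perm X) (m n : ℤ) (x : X) :
    (f ^ m) ((f ^ n) x) = (f ^ (m + n)) x := by
  rw [zpow_add, Equiv.Perm.mul_apply]

theorem semiconj_zpow {F : Equiv.Perm X} {f : Equiv.Perm Y} {π : X → Y}
    (h : Function.Semiconj π F f) (n : ℤ) :
    Function.Semiconj π (F ^ n : Equiv.Perm X) (f ^ n : Equiv.Perm Y) := by
  induction n with
  | zero => exact Function.Semiconj.id_right
  | succ n ih => simpa only [zpow_add_one, Equiv.Perm.coe_mul] using ih.comp_right h
  | pred n ih =>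
    have h_inv : Function.Semiconj π (F⁻¹ : Equiv.Perm X) (f⁻¹ : Equiv.Perm Y) :=
      h.inverses_right F.right_inv f.left_inv
    simpa only [zpow_sub_one, Equiv.Perm.coe_mul] using ih.comp_right h_inv

theorem continuous_zpow_perm [TopologicalSpace X] {f : Equiv.Perm X} (hf : Continuous f)
    (hf' : Continuous f.symm) (n : ℤ) : Continuous (f ^ n : Equiv.Perm X) := by
  induction n with
  | zero => exact continuous_id
  | succ n ih => rw [zpow_add_one, Equiv.Perm.coe_mul]; exact ih.comp hf
  | pred n ih => rw [zpow_sub_one, Equiv.Perm.coe_mul]; exact ih.comp hf'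

theorem eventually_forall_Icc_dist_zpow_lt [PseudoMetricSpace X] {f : Equiv.Perm X}
    (hf : Continuous f) (hf' : Continuous f.symm) {r : ℝ} (hr : 0 < r) (a b : ℤ) (x : X) :
    ∀ᶠ y in 𝓝 x, ∀ k ∈ Icc a b, dist ((f ^ k) x) ((f ^ k) y) < r := by
  rw [eventually_all_finite (finite_Icc a b)]
  intro k _
  filter_upwards [(continuous_zpow_perm hf hf' k).continuousAt.eventually
    (Metric.ball_mem_nhds _ hr)] with y hy
  rwa [dist_comm]

end Iterates

section UniformExpansivity

/-- Uniform expansivity of `f` in quantitative form: orbits that stay `c`-close on the window of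
radius `J` around time `k` are `η`-close at time `k`. -/
def SeparatesWithin {X : Type*} [MetricSpace X] (f : Equiv.Perm X) (c η : ℝ) (J : ℕ) : Prop :=
  ∀ (p q : X) (k : ℤ), (∀ l ∈ Icc (k - J) (k + J), dist ((f ^ l) p) ((f ^ l) q) ≤ c) →
    dist ((f ^ k) p) ((f ^ k) q) < η

variable {X : Type*} [MetricSpace X] {f : Equiv.Perm X} {c η : ℝ}

theorem Expansive.exists_separatesWithin [CompactSpace X] (h : Expansive f c) (hf : Continuous f)
    (hf' : Continuous f.symm) (hη : 0 < η) : ∃ J, SeparatesWithin f c η J := by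
  let V (J : ℕ) : Set (X × X) :=
    {x | ∀ l ∈ Icc (-J : ℤ) J, dist ((f ^ l) x.1) ((f ^ l) x.2) ≤ c}
  have hV_anti : Antitone V := fun m n hmn x hx l hl ↦
    hx l ⟨by have := hl.1; omega, by have := hl.2; omega⟩
  have hV_closed : ∀ J, IsClosed (V J) := fun J ↦ by
    simp only [V, ofPred_forall]
    refine isClosed_biInter fun l _ ↦ ?_
    have := continuous_zpow_perm hf hf' l
    exact isClosed_le (by fun_prop) continuous_const
  have hV_diag : ∀ x ∈ ⋂ J, V J, {x : X × X | dist x.1 x.2 < η} ∈ 𝓝 x := fun x hx ↦ by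
    have h_eq : x.1 = x.2 := by
      by_contra hne
      obtain ⟨n, hn⟩ := h _ _ hne
      exact hn.not_ge (mem_iInter.1 hx n.natAbs n ⟨by omega, by omega⟩)
    exact (isOpen_lt continuous_dist continuous_const).mem_nhds (by simpa [h_eq] using hη)
  obtain ⟨J, hJ⟩ := exists_subset_nhds_of_compactSpace hV_anti.directed_ge hV_closed hV_diag
  refine ⟨J, fun p q k hpq ↦ hJ (a := ((f ^ k) p, (f ^ k) q)) fun l hl ↦ ?_⟩
  simp only [zpow_apply_zpow_apply]
  exact hpq _ ⟨by have := hl.1; omega, by have := hl.2; omega⟩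

theorem SeparatesWithin.dist_lt_of_forall_le {J : ℕ} (h : SeparatesWithin f c η J) {p q : X}
    {a : ℤ} (hpq : ∀ k ≤ a, dist ((f ^ k) p) ((f ^ k) q) ≤ c) :
    ∀ k ≤ a - J, dist ((f ^ k) p) ((f ^ k) q) < η :=
  fun k hk ↦ h p q k fun l hl ↦ hpq l (by have := hl.2; omega)

theorem Expansive.eq_of_mem_Ws_inter_Wu (h : Expansive f c) {ε : ℝ} (hε : 2 * ε ≤ c) {x y z z' : X}
    (hz : z ∈ Ws f ε x ∩ Wu f ε y) (hz' : z' ∈ Ws f ε x ∩ Wu f ε y) : z = z' := by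
  by_contra hne
  obtain ⟨n, hn⟩ := h _ _ hne
  have h_lt : dist ((f ^ n) z) ((f ^ n) z') < 2 * ε := by
    rw [two_mul]
    rcases Int.eq_nat_or_neg n with ⟨k, rfl | rfl⟩
    · exact (dist_triangle_left _ _ _).trans_lt (add_lt_add (hz.1 k) (hz'.1 k))
    · exact (dist_triangle_left _ _ _).trans_lt (add_lt_add (hz.2 k) (hz'.2 k))
  linarith

end UniformExpansivity

section DenseRange

variable {R X Y : Type*} [MetricSpace X] {F : Equiv.Perm X} {c : ℝ} {ι : R → X}

theorem expansive_of_denseRange (hι : DenseRange ι) (hF : Continuous F) (hF' : Continuous F.symm)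
    (h : ∀ ε > 0, ∃ N : ℕ, ∀ y y' : R,
      (∀ m ∈ Icc (-N : ℤ) N, dist ((F ^ m) (ι y)) ((F ^ m) (ι y')) < c) →
        dist (ι y) (ι y') ≤ ε)
    {c' : ℝ} (hc' : c' < c) : Expansive F c' := by
  intro x x' hne
  by_contra! h_close
  have h_pos : 0 < dist x x' := dist_pos.2 hne
  obtain ⟨N, hN⟩ := h (dist x x' / 2) (half_pos h_pos)
  have h_all : ∀ p q : X, (∀ m ∈ Icc (-N : ℤ) N, dist ((F ^ m) p) ((F ^ m) q) < c) →
      dist p q ≤ dist x x' / 2 := fun p q ↦ by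
    refine hι.induction_on₂ (p := fun p q ↦ (∀ m ∈ Icc (-N : ℤ) N,
      dist ((F ^ m) p) ((F ^ m) q) < c) → dist p q ≤ dist x x' / 2) (isClosed_imp ?_ ?_) hN p q
    · simp only [ofPred_forall]
      refine (finite_Icc _ _).isOpen_biInter fun m _ ↦ ?_
      have := continuous_zpow_perm hF hF' m
      exact isOpen_lt (by fun_prop) continuous_const
    · exact isClosed_le continuous_dist continuous_const
  linarith [h_all x x' fun m _ ↦ (h_close m).trans_lt hc']

theorem canonicalCoords_of_denseRange [CompactSpace X] (hι : DenseRange ι) (hF : Continuous F)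
    (hF' : Continuous F.symm) (hc : 0 < c) (hexp : Expansive F c)
    (h : ∀ ε > 0, ∃ δ > 0, ∀ y y' : R, dist (ι y) (ι y') < δ → ∃ z : X, ∀ n : ℕ,
      dist ((F ^ (n : ℤ)) (ι y)) ((F ^ (n : ℤ)) z) ≤ ε ∧
        dist ((F ^ (-n : ℤ)) (ι y')) ((F ^ (-n : ℤ)) z) ≤ ε) :
    CanonicalCoords F := by
  refine ⟨c / 2, half_pos hc, fun ε hε hεc ↦ ?_⟩
  obtain ⟨δ, hδ, h_dense⟩ := h (ε / 2) (half_pos hε)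
  let Z : Set ((X × X) × X) := {q | ∀ n : ℕ,
    dist ((F ^ (n : ℤ)) q.1.1) ((F ^ (n : ℤ)) q.2) ≤ ε / 2 ∧
      dist ((F ^ (-n : ℤ)) q.1.2) ((F ^ (-n : ℤ)) q.2) ≤ ε / 2}
  have hZ : IsClosed Z := by
    simp only [Z, ofPred_forall, ofPred_and]
    refine isClosed_iInter fun n ↦ ?_
    have h_pos := continuous_zpow_perm hF hF' n
    have h_neg := continuous_zpow_perm hF hF' (-n)
    exact (isClosed_le (by fun_prop) continuous_const).inter
      (isClosed_le (by fun_prop) continuous_const)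
  have h_bracket : ∀ x x' : X, dist x x' < δ → (x, x') ∈ Prod.fst '' Z := fun x x' ↦ by
    refine hι.induction_on₂ (p := fun x x' ↦ dist x x' < δ → (x, x') ∈ Prod.fst '' Z)
      (isClosed_imp (isOpen_lt continuous_dist continuous_const)
        (isClosedMap_fst_of_compactSpace _ hZ)) (fun y y' hyy' ↦ ?_) x x'
    obtain ⟨z, hz⟩ := h_dense y y' hyy'
    exact ⟨((ι y, ι y'), z), hz, rfl⟩
  refine ⟨δ, hδ, fun x x' hxx' ↦ ?_⟩
  obtain ⟨⟨_, z⟩, hz, rfl⟩ := h_bracket x x' hxx'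
  have hz_mem : z ∈ Ws F ε x ∩ Wu F ε x' :=
    ⟨fun n ↦ (hz n).1.trans_lt (half_lt_self hε), fun n ↦ (hz n).2.trans_lt (half_lt_self hε)⟩
  exact ⟨z, hz_mem, fun z' hz' ↦ hexp.eq_of_mem_Ws_inter_Wu (by linarith) hz' hz_mem⟩

theorem Expansive.uResolving (hexp : Expansive F c) {π : X → Y} {f : Equiv.Perm Y}
    (hπ : Function.Semiconj π F f)
    (h : ∃ δ > 0, ∀ x x' : X, dist x x' < δ → π x = π x' →
      ∀ n : ℕ, dist ((F ^ (n : ℤ)) x) ((F ^ (n : ℤ)) x') ≤ c) :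
    UResolving F π := by
  obtain ⟨δ, hδ, h_forward⟩ := h
  intro x₀ x hx x' hx' hπx
  have h_asymp : Tendsto (fun n : ℕ ↦ dist ((F ^ (-n : ℤ)) x) ((F ^ (-n : ℤ)) x')) atTop (𝓝 0) :=
    squeeze_zero (fun _ ↦ dist_nonneg) (fun _ ↦ dist_triangle_left _ _ _)
      (by simpa only [add_zero] using Tendsto.add hx hx')
  by_contra hne
  obtain ⟨k, hk⟩ := hexp _ _ hne
  obtain ⟨n, hn_lt, hn_le⟩ :=
    ((h_asymp.eventually_lt_const hδ).and (eventually_ge_atTop k.natAbs)).exists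
  refine hk.not_ge ?_
  have h_fiber : π ((F ^ (-n : ℤ)) x) = π ((F ^ (-n : ℤ)) x') := by
    rw [semiconj_zpow hπ, semiconj_zpow hπ, hπx]
  have h_eq : ((k + n).toNat : ℤ) + -n = k := by omega
  simpa only [zpow_apply_zpow_apply, h_eq] using h_forward _ _ hn_lt h_fiber (k + n).toNat

theorem forward_dist_le_of_denseRange [MetricSpace Y] (hι : DenseRange ι) (hF : Continuous F)
    (hF' : Continuous F.symm) {π : X → Y} (hπ : Continuous π) {r δ ε : ℝ} (hr : 0 < r) {L : ℕ}
    (h : ∀ (y y' : R) (n : ℕ), dist (ι y) (ι y') < δ →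
      (∀ k ∈ Icc (0 : ℤ) (n + L), dist (π ((F ^ k) (ι y))) (π ((F ^ k) (ι y'))) < r) →
        dist ((F ^ (n : ℤ)) (ι y)) ((F ^ (n : ℤ)) (ι y')) ≤ ε)
    {f : Equiv.Perm Y} (hsemi : Function.Semiconj π F f)
    {x x' : X} (hxx' : dist x x' < δ) (hπx : π x = π x') (n : ℕ) :
    dist ((F ^ (n : ℤ)) x) ((F ^ (n : ℤ)) x') ≤ ε := by
  have h_all : dist x x' < δ →
      (∀ k ∈ Icc (0 : ℤ) (n + L), dist (π ((F ^ k) x)) (π ((F ^ k) x')) < r) →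
        dist ((F ^ (n : ℤ)) x) ((F ^ (n : ℤ)) x') ≤ ε := by
    refine hι.induction_on₂ (p := fun x x' ↦ dist x x' < δ →
      (∀ k ∈ Icc (0 : ℤ) (n + L), dist (π ((F ^ k) x)) (π ((F ^ k) x')) < r) →
        dist ((F ^ (n : ℤ)) x) ((F ^ (n : ℤ)) x') ≤ ε)
      (isClosed_imp (isOpen_lt continuous_dist continuous_const) (isClosed_imp ?_ ?_))
      (fun y y' ↦ h y y' n) x x'
    · simp only [ofPred_forall]
      refine (finite_Icc _ _).isOpen_biInter fun k _ ↦ ?_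
      have := continuous_zpow_perm hF hF' k
      exact isOpen_lt (by fun_prop) continuous_const
    · have := continuous_zpow_perm hF hF' n
      exact isClosed_le (by fun_prop) continuous_const
  refine h_all hxx' fun k _ ↦ ?_
  rwa [semiconj_zpow hsemi, semiconj_zpow hsemi, hπx, dist_self]

theorem topTransitive_of_isInducing [MetricSpace Y] [TopologicalSpace R] {f : Equiv.Perm Y}
    (hf : Continuous f) (hf' : Continuous f.symm) (htrans : TopTransitive f) (hι : DenseRange ι)
    (hι_cont : Continuous ι) {p : R → Y} (hp : IsInducing p) (hp_dense : DenseRange p)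
    {g : Equiv.Perm R} (hpg : Function.Semiconj p g f) (hιg : Function.Semiconj ι g F) :
    TopTransitive F := by
  have h_preimage : ∀ U : Set X, IsOpen U → U.Nonempty →
      ∃ O : Set Y, IsOpen O ∧ O.Nonempty ∧ p ⁻¹' O = ι ⁻¹' U := fun U hU hne ↦ by
    obtain ⟨O, hO, hOU⟩ := hp.isOpen_iff.1 (hU.preimage hι_cont)
    obtain ⟨y, hy⟩ := hι.exists_mem_open hU hne
    exact ⟨O, hO, ⟨p y, hOU.ge hy⟩, hOU⟩
  intro U V hU hV hU_ne hV_ne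
  obtain ⟨O, hO, hO_ne, hOU⟩ := h_preimage U hU hU_ne
  obtain ⟨O', hO', hO'_ne, hO'V⟩ := h_preimage V hV hV_ne
  obtain ⟨n, hn⟩ := htrans O O' hO hO' hO_ne hO'_ne
  have h_open : IsOpen ((f ^ (n : ℤ)) ⁻¹' O ∩ O') :=
    (hO.preimage (continuous_zpow_perm hf hf' n)).inter hO'
  obtain ⟨y, hy, hy'⟩ := hp_dense.exists_mem_open h_open hn
  refine ⟨n, ι y, ?_, hO'V.le hy'⟩
  rw [mem_preimage, ← semiconj_zpow hιg]
  apply hOU.le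
  rwa [mem_preimage, semiconj_zpow hpg]

end DenseRange

theorem eq_of_isInducing_of_denseRange {R X Y : Type*} [TopologicalSpace R] [TopologicalSpace X]
    [T2Space X] [TopologicalSpace Y] {ι : R → X} (hι : DenseRange ι) (hι_cont : Continuous ι)
    {π : X → Y} (hπ : Continuous π) (hp : IsInducing (π ∘ ι)) {x : X} {y : R}
    (h : π x = π (ι y)) : x = ι y := by
  have : (comap ι (𝓝 x)).NeBot := comap_neBot fun U hU ↦ by
    obtain ⟨_, hy', y', rfl⟩ := mem_closure_iff_nhds.1 (hι x) U hU
    exact ⟨y', hy'⟩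
  have h_to_y : comap ι (𝓝 x) ≤ 𝓝 y := by
    rw [hp.nhds_eq_comap, Function.comp_apply, ← h, ← tendsto_iff_comap]
    exact hπ.continuousAt.tendsto.comp tendsto_comap
  exact tendsto_nhds_unique tendsto_comap (hι_cont.continuousAt.tendsto.mono_left h_to_y)

section AlphaBasin

variable {Y : Type*} [MetricSpace Y] {f : Equiv.Perm Y} {y₀ y z : Y}

/-- The α-basin of `y₀`: the set of points whose backward orbit accumulates at `y₀`. -/
def alphaBasin (f : Equiv.Perm Y) (y₀ : Y) : Set Y :=
  {y | MapClusterPt y₀ atBot fun k : ℤ ↦ (f ^ k) y}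

theorem mem_alphaBasin_iff :
    y ∈ alphaBasin f y₀ ↔ ∀ U ∈ 𝓝 y₀, ∃ᶠ k : ℤ in atBot, (f ^ k) y ∈ U :=
  mapClusterPt_iff_frequently

theorem zpow_mem_alphaBasin (hy : y ∈ alphaBasin f y₀) (n : ℤ) :
    (f ^ n) y ∈ alphaBasin f y₀ := by
  have h_comp : (fun k : ℤ ↦ (f ^ k) ((f ^ n) y)) =
      (fun k : ℤ ↦ (f ^ k) y) ∘ OrderIso.addRight n :=
    funext fun k ↦ zpow_apply_zpow_apply f k n y
  change MapClusterPt _ _ _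
  rwa [h_comp, mapClusterPt_comp, OrderIso.map_atBot]

theorem mem_alphaBasin_of_forall_le {c : ℝ} (hf : ∀ η > 0, ∃ J, SeparatesWithin f c η J)
    (hy : y ∈ alphaBasin f y₀) (hz : ∀ k ≤ (0 : ℤ), dist ((f ^ k) y) ((f ^ k) z) ≤ c) :
    z ∈ alphaBasin f y₀ := by
  rw [mem_alphaBasin_iff] at hy ⊢
  intro U hU
  obtain ⟨ε, hε, hεU⟩ := Metric.mem_nhds_iff.1 hU
  obtain ⟨J, hJ⟩ := hf (ε / 2) (half_pos hε)
  have h_asymp : ∀ᶠ k : ℤ in atBot, dist ((f ^ k) y) ((f ^ k) z) < ε / 2 :=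
    (eventually_le_atBot (0 - J : ℤ)).mono (hJ.dist_lt_of_forall_le hz)
  refine ((hy _ (Metric.ball_mem_nhds y₀ (half_pos hε))).and_eventually h_asymp).mono ?_
  rintro k ⟨hky, hkz⟩
  refine hεU ?_
  rw [Metric.mem_ball] at hky ⊢
  linarith [dist_triangle_left ((f ^ k) z) y₀ ((f ^ k) y)]

theorem TopTransitive.dense_setOf_exists_zpow_mem (htrans : TopTransitive f) (hf : Continuous f)
    (hf' : Continuous f.symm) {U : Set Y} (hU : IsOpen U) (hU_ne : U.Nonempty) (a : ℤ) :
    Dense {y | ∃ k ≤ a, (f ^ k) y ∈ U} := by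
  refine dense_iff_inter_open.2 fun V hV hV_ne ↦ ?_
  obtain ⟨n, v, hvV, hvU⟩ := htrans ((f ^ (-a)) ⁻¹' V) U
    (hV.preimage (continuous_zpow_perm hf hf' (-a))) hU (hV_ne.preimage (f ^ (-a)).surjective) hU_ne
  refine ⟨(f ^ (-a)) ((f ^ (n : ℤ)) v), hvV, a - n, by omega, ?_⟩
  have h_time : a - n + (-a + n) = 0 := by ring
  simpa only [zpow_apply_zpow_apply, h_time, zpow_zero, Equiv.Perm.one_apply] using hvU

theorem TopTransitive.alphaBasin_mem_residual (htrans : TopTransitive f) (hf : Continuous f)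
    (hf' : Continuous f.symm) (y₀ : Y) : alphaBasin f y₀ ∈ residual Y := by
  have h_visit : ∀ (j : ℕ) (a : ℤ),
      {y | ∃ k ≤ a, (f ^ k) y ∈ Metric.ball y₀ (j + 1 : ℝ)⁻¹} ∈ residual Y := fun j a ↦ by
    refine residual_of_dense_open ?_ (htrans.dense_setOf_exists_zpow_mem hf hf' Metric.isOpen_ball
      (Metric.nonempty_ball.2 (by positivity)) a)
    simp only [← exists_prop, ofPred_exists]
    exact isOpen_biUnion fun k _ ↦ Metric.isOpen_ball.preimage (continuous_zpow_perm hf hf' k)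
  filter_upwards [eventually_countable_forall.2 fun j ↦
    eventually_countable_forall.2 (h_visit j)] with y hy
  exact Metric.nhds_basis_ball_inv_nat_succ.mapClusterPt_iff_frequently.2 fun j _ ↦
    frequently_atBot.2 (by simpa using hy j)

end AlphaBasin

/-- A symbolic presentation of the system `(Y, f)`: symbolic points are distributed among finitely
many cells, small at the expansivity `scale`, and two symbolic points in a common cell can be
spliced, past of one to future of the other. This is all that is used of the SFT. -/
structure CellPresentation.{u, v} {Y : Type u} [MetricSpace Y] (f : Equiv.Perm Y) where
  Point : Type v
  Cell : Type v
  finite_cell : Finite Cell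
  shift : Equiv.Perm Point
  cell : Point → Cell
  proj : Point → Y
  semiconj : Function.Semiconj proj shift f
  surjective : Function.Surjective proj
  splice : ∀ s u, cell s = cell u → ∃ v,
    (∀ k ≤ (0 : ℤ), cell ((shift ^ k) v) = cell ((shift ^ k) s)) ∧
      ∀ k ≥ (0 : ℤ), cell ((shift ^ k) v) = cell ((shift ^ k) u)
  scale : ℝ
  scale_pos : 0 < scale
  dist_le : ∀ s u, cell s = cell u → dist (proj s) (proj u) ≤ scale
  isClosed_cell : ∀ a, IsClosed (proj '' (cell ⁻¹' {a}))
  separates : ∀ η > 0, ∃ J, SeparatesWithin f (4 * scale) η J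

namespace CellPresentation

variable {Y : Type*} [MetricSpace Y] {f : Equiv.Perm Y} (P : CellPresentation f)

attribute [instance] finite_cell

section Splicing

theorem proj_zpow (n : ℤ) (s : P.Point) : P.proj ((P.shift ^ n) s) = (f ^ n) (P.proj s) :=
  semiconj_zpow P.semiconj n s

theorem splice_at (m : ℤ) {s u : P.Point}
    (h : P.cell ((P.shift ^ m) s) = P.cell ((P.shift ^ m) u)) :
    ∃ v, (∀ k ≤ m, P.cell ((P.shift ^ k) v) = P.cell ((P.shift ^ k) s)) ∧
      ∀ k ≥ m, P.cell ((P.shift ^ k) v) = P.cell ((P.shift ^ k) u) := by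
  obtain ⟨v, hvs, hvu⟩ := P.splice _ _ h
  simp only [zpow_apply_zpow_apply] at hvs hvu
  refine ⟨(P.shift ^ (-m)) v, fun k hk ↦ ?_, fun k hk ↦ ?_⟩
  · simpa only [zpow_apply_zpow_apply, neg_add_cancel_right, sub_eq_add_neg]
      using hvs (k - m) (by omega)
  · simpa only [zpow_apply_zpow_apply, neg_add_cancel_right, sub_eq_add_neg]
      using hvu (k - m) (by omega)

theorem dist_zpow_le {k : ℤ} {s u : P.Point}
    (h : P.cell ((P.shift ^ k) s) = P.cell ((P.shift ^ k) u)) :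
    dist ((f ^ k) (P.proj s)) ((f ^ k) (P.proj u)) ≤ P.scale := by
  simpa only [P.proj_zpow] using P.dist_le _ _ h

/-- A window radius over which `4 * scale`-shadowing improves to `scale / 2`-shadowing. -/
noncomputable def window : ℕ :=
  (P.separates (P.scale / 2) (half_pos P.scale_pos)).choose

theorem separatesWithin_window : SeparatesWithin f (4 * P.scale) (P.scale / 2) P.window :=
  (P.separates (P.scale / 2) (half_pos P.scale_pos)).choose_spec

/-- The cells at time `0` of the symbolic points that `r`-shadow the past of `y`. -/
def pastCells (r : ℝ) (y : Y) : Set P.Cell :=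
  {a | ∃ s, P.cell s = a ∧ ∀ k ≤ (0 : ℤ), dist ((f ^ k) (P.proj s)) ((f ^ k) y) ≤ r}

theorem pastCells_mono {r r' : ℝ} (h : r ≤ r') (y : Y) : P.pastCells r y ⊆ P.pastCells r' y := by
  rintro a ⟨s, rfl, hs⟩
  exact ⟨s, rfl, fun k hk ↦ (hs k hk).trans h⟩

theorem mem_pastCells_zpow {r : ℝ} {m : ℤ} {y : Y} {a : P.Cell} :
    a ∈ P.pastCells r ((f ^ m) y) ↔ ∃ s, P.cell ((P.shift ^ m) s) = a ∧
      ∀ k ≤ m, dist ((f ^ k) (P.proj s)) ((f ^ k) y) ≤ r := by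
  constructor
  · rintro ⟨s, rfl, hs⟩
    refine ⟨(P.shift ^ (-m)) s, by simp only [zpow_apply_zpow_apply, add_neg_cancel, zpow_zero,
      Equiv.Perm.one_apply], fun k hk ↦ ?_⟩
    have := hs (k - m) (by omega)
    rwa [zpow_apply_zpow_apply, sub_add_cancel, sub_eq_add_neg, ← zpow_apply_zpow_apply,
      ← P.proj_zpow] at this
  · rintro ⟨s, rfl, hs⟩
    refine ⟨(P.shift ^ m) s, rfl, fun k hk ↦ ?_⟩
    simpa only [P.proj_zpow, zpow_apply_zpow_apply] using hs (k + m) (by omega)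

theorem exists_splice_shadowing {m i : ℤ} {u : P.Point} {y : Y}
    (hu : P.cell ((P.shift ^ m) u) ∈ P.pastCells (3 * P.scale) ((f ^ m) y))
    (hmi : m + P.window ≤ i)
    (hd : ∀ k ∈ Icc m i, dist ((f ^ k) (P.proj u)) ((f ^ k) y) ≤ 2 * P.scale) :
    ∃ v, (∀ k ≥ m, P.cell ((P.shift ^ k) v) = P.cell ((P.shift ^ k) u)) ∧
      (∀ k ≤ i, dist ((f ^ k) (P.proj v)) ((f ^ k) y) ≤ 3 * P.scale) ∧
      ∀ k ≤ i - P.window, dist ((f ^ k) (P.proj v)) ((f ^ k) y) ≤ P.scale := by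
  have h_scale := P.scale_pos
  obtain ⟨s, hs, hsy⟩ := P.mem_pastCells_zpow.1 hu
  obtain ⟨v, hvs, hvu⟩ := P.splice_at m hs
  have h_past : ∀ k ≤ m, dist ((f ^ k) (P.proj v)) ((f ^ k) y) ≤ 4 * P.scale := fun k hk ↦ by
    linarith [dist_triangle ((f ^ k) (P.proj v)) ((f ^ k) (P.proj s)) ((f ^ k) y),
      P.dist_zpow_le (hvs k hk), hsy k hk]
  have h_mid : ∀ k ∈ Icc m i, dist ((f ^ k) (P.proj v)) ((f ^ k) y) ≤ 3 * P.scale :=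
    fun k hk ↦ by
      linarith [dist_triangle ((f ^ k) (P.proj v)) ((f ^ k) (P.proj u)) ((f ^ k) y),
        P.dist_zpow_le (hvu k hk.1), hd k hk]
  have h_improved : ∀ k ≤ i - P.window, dist ((f ^ k) (P.proj v)) ((f ^ k) y) < P.scale / 2 :=
    P.separatesWithin_window.dist_lt_of_forall_le fun k hk ↦ by
      rcases le_total k m with hkm | hmk
      · exact h_past k hkm
      · linarith [h_mid k ⟨hmk, hk⟩]
  refine ⟨v, hvu, fun k hk ↦ ?_, fun k hk ↦ by linarith [h_improved k hk]⟩
  rcases le_total k m with hkm | hmk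
  · linarith [h_improved k (by omega)]
  · exact h_mid k ⟨hmk, hk⟩

end Splicing

section Compatibility

/-- Every cell reached by shadowing the past of `y` is reached by shadowing that of `y'`. The
radius grows from `scale` to `3 * scale` so that the relation composes, up to waiting for a
`window`. -/
def PastRefines (y y' : Y) : Prop :=
  P.pastCells P.scale y ⊆ P.pastCells (3 * P.scale) y'

variable {P}

theorem PastRefines.of_pastCells_eq {y y' : Y}
    (h : P.pastCells P.scale y = P.pastCells P.scale y') : P.PastRefines y y' :=
  h.subset.trans (P.pastCells_mono (by linarith [P.scale_pos]) y')

theorem PastRefines.of_forall_le {m : ℤ} {y y' : Y}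
    (h : ∀ k ≤ m, dist ((f ^ k) y) ((f ^ k) y') ≤ P.scale) :
    P.PastRefines ((f ^ m) y) ((f ^ m) y') := fun a ha ↦ by
  obtain ⟨u, hu, huy⟩ := P.mem_pastCells_zpow.1 ha
  refine P.mem_pastCells_zpow.2 ⟨u, hu, fun k hk ↦ ?_⟩
  linarith [dist_triangle ((f ^ k) (P.proj u)) ((f ^ k) y) ((f ^ k) y'), huy k hk, h k hk,
    P.scale_pos]

theorem PastRefines.comp {m i : ℤ} {y₁ y₂ y₃ : Y} (h₁₂ : P.PastRefines ((f ^ m) y₁) ((f ^ m) y₂))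
    (h₂₃ : P.PastRefines ((f ^ m) y₂) ((f ^ m) y₃)) (hmi : m + P.window ≤ i)
    (d₁₂ : ∀ k ∈ Icc m i, dist ((f ^ k) y₁) ((f ^ k) y₂) ≤ P.scale)
    (d₁₃ : ∀ k ∈ Icc m i, dist ((f ^ k) y₁) ((f ^ k) y₃) ≤ P.scale) :
    P.PastRefines ((f ^ i) y₁) ((f ^ i) y₃) := fun a ha ↦ by
  obtain ⟨u, rfl, hu⟩ := P.mem_pastCells_zpow.1 ha
  have h_near : ∀ y, (∀ k ∈ Icc m i, dist ((f ^ k) y₁) ((f ^ k) y) ≤ P.scale) →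
      ∀ k ∈ Icc m i, dist ((f ^ k) (P.proj u)) ((f ^ k) y) ≤ 2 * P.scale := fun y hy k hk ↦ by
    linarith [dist_triangle ((f ^ k) (P.proj u)) ((f ^ k) y₁) ((f ^ k) y), hu k hk.2, hy k hk]
  have hu₂ := h₁₂ (P.mem_pastCells_zpow.2 ⟨u, rfl, fun k hk ↦ hu k (by omega)⟩)
  obtain ⟨v, hvu, -, hvy₂⟩ := P.exists_splice_shadowing hu₂ hmi (h_near y₂ d₁₂)
  have hu₃ := h₂₃ (P.mem_pastCells_zpow.2 ⟨v, hvu m le_rfl, fun k hk ↦ hvy₂ k (by omega)⟩)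
  obtain ⟨w, hwu, hwy₃, -⟩ := P.exists_splice_shadowing hu₃ hmi (h_near y₃ d₁₃)
  exact P.mem_pastCells_zpow.2 ⟨w, hwu i (by omega), hwy₃⟩

variable (P) in
/-- Compatible points are close and can be reached, up to the change of radius in `PastRefines`,
through the same cells. -/
structure Compatible (y y' : Y) : Prop where
  dist_le : dist y y' ≤ P.scale
  refines : P.PastRefines y y'
  refines' : P.PastRefines y' y

theorem Compatible.refl (y : Y) : P.Compatible y y :=
  ⟨(dist_self y).le.trans P.scale_pos.le, .of_pastCells_eq rfl, .of_pastCells_eq rfl⟩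

theorem Compatible.symm {y y' : Y} (h : P.Compatible y y') : P.Compatible y' y :=
  ⟨dist_comm y y' ▸ h.dist_le, h.refines', h.refines⟩

theorem Compatible.of_forall_le {m : ℤ} {y y' : Y}
    (h : ∀ k ≤ m, dist ((f ^ k) y) ((f ^ k) y') ≤ P.scale) :
    P.Compatible ((f ^ m) y) ((f ^ m) y') :=
  ⟨h m le_rfl, .of_forall_le h, .of_forall_le fun k hk ↦ dist_comm ((f ^ k) y) _ ▸ h k hk⟩

theorem Compatible.comp {m i : ℤ} {y₁ y₂ y₃ : Y} (h₁₂ : P.Compatible ((f ^ m) y₁) ((f ^ m) y₂))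
    (h₂₃ : P.Compatible ((f ^ m) y₂) ((f ^ m) y₃)) (hmi : m + P.window ≤ i)
    (d₁₂ : ∀ k ∈ Icc m i, dist ((f ^ k) y₁) ((f ^ k) y₂) ≤ P.scale)
    (d₂₃ : ∀ k ∈ Icc m i, dist ((f ^ k) y₂) ((f ^ k) y₃) ≤ P.scale)
    (d₁₃ : ∀ k ∈ Icc m i, dist ((f ^ k) y₁) ((f ^ k) y₃) ≤ P.scale) :
    P.Compatible ((f ^ i) y₁) ((f ^ i) y₃) where
  dist_le := d₁₃ i ⟨by omega, le_rfl⟩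
  refines := h₁₂.refines.comp h₂₃.refines hmi d₁₂ d₁₃
  refines' := h₂₃.refines'.comp h₁₂.refines' hmi
    (fun k hk ↦ dist_comm ((f ^ k) y₂) _ ▸ d₂₃ k hk)
    (fun k hk ↦ dist_comm ((f ^ k) y₁) _ ▸ d₁₃ k hk)

theorem Compatible.propagate {m i : ℤ} {y y' : Y} (h : P.Compatible ((f ^ m) y) ((f ^ m) y'))
    (hmi : m + P.window ≤ i) (hd : ∀ k ∈ Icc m i, dist ((f ^ k) y) ((f ^ k) y') ≤ P.scale) :
    P.Compatible ((f ^ i) y) ((f ^ i) y') :=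
  (Compatible.refl _).comp h hmi (fun _ _ ↦ (dist_self _).le.trans P.scale_pos.le) hd hd

variable (P) in
/-- Compatibility of orbits at all times in `[-N, N]`; these relations are the entourages of the
uniformity whose completion is the Smale space. -/
def CompatibleWithin (N : ℕ) (y y' : Y) : Prop :=
  ∀ m ∈ Icc (-N : ℤ) N, P.Compatible ((f ^ m) y) ((f ^ m) y')

variable {N M : ℕ} {y y' : Y}

theorem CompatibleWithin.refl (N : ℕ) (y : Y) : P.CompatibleWithin N y y :=
  fun _ _ ↦ .refl _

theorem CompatibleWithin.symm (h : P.CompatibleWithin N y y') : P.CompatibleWithin N y' y :=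
  fun m hm ↦ (h m hm).symm

theorem CompatibleWithin.anti (h : P.CompatibleWithin M y y') (hNM : N ≤ M) :
    P.CompatibleWithin N y y' :=
  fun m hm ↦ h m ⟨by have := hm.1; omega, by have := hm.2; omega⟩

theorem CompatibleWithin.zpow (n : ℤ) (h : P.CompatibleWithin (N + n.natAbs) y y') :
    P.CompatibleWithin N ((f ^ n) y) ((f ^ n) y') := fun m ⟨hm, hm'⟩ ↦ by
  simpa only [zpow_apply_zpow_apply] using h (m + n) ⟨by omega, by omega⟩

theorem CompatibleWithin.dist_lt {η : ℝ} {J : ℕ} (hJ : SeparatesWithin f (4 * P.scale) η J)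
    (h : P.CompatibleWithin (N + J) y y') {k : ℤ} (hk : k ∈ Icc (-N : ℤ) N) :
    dist ((f ^ k) y) ((f ^ k) y') < η :=
  hJ y y' k fun l ⟨hl, hl'⟩ ↦ by
    linarith [P.scale_pos, (h l ⟨by have := hk.1; omega, by have := hk.2; omega⟩).dist_le]

theorem CompatibleWithin.trans {y₁ y₂ y₃ : Y} (h₁₂ : P.CompatibleWithin (N + 2 * P.window) y₁ y₂)
    (h₂₃ : P.CompatibleWithin (N + 2 * P.window) y₂ y₃) : P.CompatibleWithin N y₁ y₃ := by
  have h_half : ∀ {z z' : Y}, P.CompatibleWithin (N + 2 * P.window) z z' →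
      ∀ k ∈ Icc (-(N + P.window : ℕ) : ℤ) (N + P.window : ℕ),
        dist ((f ^ k) z) ((f ^ k) z') < P.scale / 2 := fun h k hk ↦
    (h.anti (by omega)).dist_lt P.separatesWithin_window hk
  have h_sum : ∀ k ∈ Icc (-(N + P.window : ℕ) : ℤ) (N + P.window : ℕ),
      dist ((f ^ k) y₁) ((f ^ k) y₃) ≤ P.scale := fun k hk ↦ by
    linarith [dist_triangle ((f ^ k) y₁) ((f ^ k) y₂) ((f ^ k) y₃), h_half h₁₂ k hk,
      h_half h₂₃ k hk]
  intro i ⟨hi, hi'⟩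
  have h_sub : ∀ k ∈ Icc (-(N + P.window : ℕ) : ℤ) i,
      k ∈ Icc (-(N + P.window : ℕ) : ℤ) (N + P.window : ℕ) := fun k hk ↦ ⟨hk.1, by
    have := hk.2; omega⟩
  refine (h₁₂ (-(N + P.window : ℕ)) ⟨by omega, by omega⟩).comp
    (h₂₃ (-(N + P.window : ℕ)) ⟨by omega, by omega⟩) (by omega)
    (fun k hk ↦ ?_) (fun k hk ↦ ?_) fun k hk ↦ h_sum k (h_sub k hk)
  · linarith [h_half h₁₂ k (h_sub k hk), P.scale_pos]
  · linarith [h_half h₂₃ k (h_sub k hk), P.scale_pos]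

theorem CompatibleWithin.exists_shadowing (h : P.CompatibleWithin (N + P.window) y y') :
    ∃ z, (∀ k ≤ (N : ℤ), dist ((f ^ k) y') ((f ^ k) z) ≤ P.scale) ∧
      ∀ k ≥ (P.window - N : ℤ), dist ((f ^ k) y) ((f ^ k) z) ≤ P.scale := by
  obtain ⟨t, rfl⟩ := P.surjective y
  have h_scale := P.scale_pos
  have ht : P.cell ((P.shift ^ (0 : ℤ)) t) ∈ P.pastCells (3 * P.scale) ((f ^ (0 : ℤ)) y') :=
    (h 0 ⟨by omega, by omega⟩).refines
      (P.mem_pastCells_zpow.2 ⟨t, rfl, fun k _ ↦ (dist_self _).le.trans h_scale.le⟩)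
  obtain ⟨s, hst, -, hsy'⟩ := P.exists_splice_shadowing (i := N + P.window) ht (by omega)
    fun k hk ↦ by linarith [(h k ⟨by have := hk.1; omega, by exact_mod_cast hk.2⟩).dist_le]
  have h_past : ∀ k ≤ (N : ℤ), dist ((f ^ k) y') ((f ^ k) (P.proj s)) ≤ P.scale :=
    fun k hk ↦ dist_comm ((f ^ k) (P.proj s)) _ ▸ hsy' k (by omega)
  refine ⟨P.proj s, h_past, fun k hk ↦ ?_⟩
  have h_future : ∀ l ≥ (-N : ℤ),
      dist ((f ^ l) (P.proj t)) ((f ^ l) (P.proj s)) ≤ 4 * P.scale := fun l hl ↦ by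
    rcases le_total 0 l with h0 | h0
    · linarith [P.dist_zpow_le (hst l h0).symm]
    · linarith [dist_triangle ((f ^ l) (P.proj t)) ((f ^ l) y') ((f ^ l) (P.proj s)),
        h_past l (by omega), (h l ⟨by omega, by omega⟩).dist_le]
  linarith [P.separatesWithin_window (P.proj t) (P.proj s) k
    fun l hl ↦ h_future l (by have := hl.1; omega)]

theorem CompatibleWithin.exists_bracket (h : P.CompatibleWithin (N + 4 * P.window) y y') :
    ∃ z, (∀ k ≤ (N : ℤ), P.Compatible ((f ^ k) y') ((f ^ k) z)) ∧
      ∀ k ≥ (-N : ℤ), P.Compatible ((f ^ k) y) ((f ^ k) z) := by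
  obtain ⟨z, h_past, h_future⟩ :=
    CompatibleWithin.exists_shadowing (N := N + 3 * P.window) (h.anti (by omega))
  have hy'z : ∀ k ≤ (N : ℤ), P.Compatible ((f ^ k) y') ((f ^ k) z) := fun k hk ↦
    .of_forall_le fun l hl ↦ h_past l (by push_cast; omega)
  have hyz : P.Compatible ((f ^ (-(N + P.window) : ℤ)) y) ((f ^ (-(N + P.window) : ℤ)) z) :=
    (h (-(N + 2 * P.window)) ⟨by push_cast; omega, by omega⟩).comp (hy'z _ (by omega)) (by omega)
      (fun k ⟨hk, hk'⟩ ↦ (h k ⟨by push_cast; omega, by omega⟩).dist_le)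
      (fun k ⟨_, hk'⟩ ↦ h_past k (by omega))
      (fun k ⟨hk, _⟩ ↦ h_future k (by push_cast; omega))
  exact ⟨z, hy'z, fun k hk ↦ hyz.propagate (by omega)
    fun l hl ↦ h_future l (by have := hl.1; push_cast; omega)⟩

theorem exists_finite_colouring_compatibleWithin (P : CellPresentation f) (N : ℕ) :
    ∃ colour : Y → Icc (-N : ℤ) N → Set P.Cell × P.Cell,
      ∀ y y', colour y = colour y' → P.CompatibleWithin N y y' := by
  refine ⟨fun y m ↦ (P.pastCells P.scale ((f ^ (m : ℤ)) y),
    P.cell (Function.surjInv P.surjective ((f ^ (m : ℤ)) y))), fun y y' h m hm ↦ ?_⟩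
  obtain ⟨h_past, h_cell⟩ := Prod.ext_iff.1 (congrFun h ⟨m, hm⟩)
  refine ⟨?_, .of_pastCells_eq h_past, .of_pastCells_eq h_past.symm⟩
  simpa only [Function.surjInv_eq] using P.dist_le _ _ h_cell

end Compatibility

section FiberStability

/-- The cells of the symbolic preimages of `y`. -/
def fiberCells (y : Y) : Set P.Cell :=
  P.cell '' (P.proj ⁻¹' {y})

/-- A point is fiber-stable if nearby points have symbolic preimages in the same cells. -/
def FiberStable (y₀ : Y) : Prop :=
  ∀ᶠ y in 𝓝 y₀, P.fiberCells y = P.fiberCells y₀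

theorem exists_fiberStable [Nonempty Y] : ∃ y₀, P.FiberStable y₀ := by
  let y₀ : Y := Function.argmin fun y ↦ (P.fiberCells y).ncard
  have h_upper : ∀ᶠ y in 𝓝 y₀, ∀ a, a ∈ P.fiberCells y → a ∈ P.fiberCells y₀ := by
    refine eventually_all.2 fun a ↦ ?_
    by_cases ha : a ∈ P.fiberCells y₀
    · exact .of_forall fun _ _ ↦ ha
    have hy₀ : y₀ ∈ (P.proj '' (P.cell ⁻¹' {a}))ᶜ := fun ⟨s, hs, h⟩ ↦ ha ⟨s, h, hs⟩
    filter_upwards [(P.isClosed_cell a).isOpen_compl.mem_nhds hy₀] with y hy ⟨s, hs, h⟩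
    exact absurd ⟨s, h, hs⟩ hy
  exact ⟨y₀, h_upper.mono fun y hy ↦
    eq_of_subset_of_ncard_le hy (Function.argmin_le (fun y ↦ (P.fiberCells y).ncard) y)⟩

variable {P}

theorem PastRefines.of_visit {y₀ y y' : Y} {η : ℝ} {J : ℕ} {m i : ℤ}
    (hη : ∀ z, dist z y₀ < η → P.fiberCells z = P.fiberCells y₀)
    (hJ : SeparatesWithin f (4 * P.scale) (η / 2) J) (hmi : m + (P.window + J : ℕ) ≤ i)
    (hy : dist ((f ^ m) y) y₀ < η / 2) (hy' : dist ((f ^ m) y') y₀ < η)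
    (hd : ∀ k ∈ Icc m i, dist ((f ^ k) y) ((f ^ k) y') ≤ P.scale) :
    P.PastRefines ((f ^ i) y) ((f ^ i) y') := fun a ha ↦ by
  obtain ⟨u, rfl, hu⟩ := P.mem_pastCells_zpow.1 ha
  have h_scale := P.scale_pos
  have h_visit : dist ((f ^ m) (P.proj u)) ((f ^ m) y) < η / 2 :=
    hJ _ _ m fun l hl ↦ by linarith [hu l (by have := hl.2; omega)]
  have h_fiber : P.fiberCells ((f ^ m) (P.proj u)) = P.fiberCells ((f ^ m) y') := by
    rw [hη _ hy', hη]
    linarith [dist_triangle ((f ^ m) (P.proj u)) ((f ^ m) y) y₀]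
  obtain ⟨s, hs, hsu⟩ : P.cell ((P.shift ^ m) u) ∈ P.fiberCells ((f ^ m) y') :=
    h_fiber ▸ ⟨_, P.proj_zpow m u, rfl⟩
  have h_past : P.cell ((P.shift ^ m) u) ∈ P.pastCells (3 * P.scale) ((f ^ m) y') :=
    ⟨s, hsu, fun k _ ↦ by rw [show P.proj s = _ from hs, dist_self]; positivity⟩
  obtain ⟨v, hvu, hvy', -⟩ := P.exists_splice_shadowing (i := i) h_past (by omega) fun k hk ↦ by
    linarith [dist_triangle ((f ^ k) (P.proj u)) ((f ^ k) y) ((f ^ k) y'), hu k hk.2, hd k hk]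
  exact P.mem_pastCells_zpow.2 ⟨v, hvu i (by omega), hvy'⟩

theorem FiberStable.eventually_compatibleWithin {y₀ y : Y} (hy₀ : P.FiberStable y₀)
    (hf : Continuous f) (hf' : Continuous f.symm) (hy : y ∈ alphaBasin f y₀) (N : ℕ) :
    ∀ᶠ y' in 𝓝 y, P.CompatibleWithin N y y' := by
  obtain ⟨η, hη, h_fiber⟩ := Metric.eventually_nhds_iff.1 hy₀
  obtain ⟨J, hJ⟩ := P.separates (η / 2) (half_pos hη)
  obtain ⟨m, hm_le, hm⟩ := frequently_atBot.1
    (mem_alphaBasin_iff.1 hy _ (Metric.ball_mem_nhds y₀ (half_pos hη))) (-(N + (P.window + J : ℕ)))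
  have h_visit : ∀ᶠ y' in 𝓝 y, (f ^ m) y' ∈ Metric.ball y₀ (η / 2) :=
    (continuous_zpow_perm hf hf' m).continuousAt.eventually (Metric.isOpen_ball.mem_nhds hm)
  filter_upwards [h_visit, eventually_forall_Icc_dist_zpow_lt hf hf' P.scale_pos m N y]
    with y' hm' hd i ⟨hi, hi'⟩
  have hd_le : ∀ k ∈ Icc m i, dist ((f ^ k) y) ((f ^ k) y') ≤ P.scale :=
    fun k hk ↦ (hd k ⟨hk.1, hk.2.trans hi'⟩).le
  exact {
    dist_le := hd_le i ⟨by omega, le_rfl⟩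
    refines := .of_visit h_fiber hJ (by omega) hm (hm'.trans (half_lt_self hη)) hd_le
    refines' := .of_visit h_fiber hJ (by omega) hm' (hm.trans (half_lt_self hη))
      fun k hk ↦ dist_comm ((f ^ k) y) _ ▸ hd_le k hk }

end FiberStability

section BasinUniformity

/-- The α-basin of `y₀`, carrying the uniformity of compatibility instead of that of `Y`. -/
@[ext]
structure Basin (P : CellPresentation f) (y₀ : Y) where
  val : Y
  mem : val ∈ alphaBasin f y₀

variable {y₀ : Y}

/-- The filter basis of the entourages `CompatibleWithin N` on the basin. -/
def compatibilityBasis (y₀ : Y) : FilterBasis (P.Basin y₀ × P.Basin y₀) where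
  sets := range fun N ↦ {q | P.CompatibleWithin N q.1.val q.2.val}
  nonempty := range_nonempty _
  inter_sets := by
    rintro _ _ ⟨N, rfl⟩ ⟨M, rfl⟩
    exact ⟨_, ⟨max N M, rfl⟩, fun q hq ↦
      ⟨CompatibleWithin.anti hq (le_max_left N M), CompatibleWithin.anti hq (le_max_right N M)⟩⟩

/-- The uniform structure on the basin whose entourages are the `CompatibleWithin N`. -/
abbrev compatibilityUniformSpace (y₀ : Y) : UniformSpace (P.Basin y₀) :=
  .ofCore <| .mkOfBasis (P.compatibilityBasis y₀)
    (by rintro _ ⟨N, rfl⟩ y; exact .refl N y.val)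
    (by rintro _ ⟨N, rfl⟩; exact ⟨_, ⟨N, rfl⟩, fun q hq ↦ CompatibleWithin.symm hq⟩)
    (by
      rintro _ ⟨N, rfl⟩
      exact ⟨_, ⟨N + 2 * P.window, rfl⟩, fun _ ⟨_, h, h'⟩ ↦ CompatibleWithin.trans h h'⟩)

theorem hasBasis_uniformity_compatibilityUniformSpace :
    (@uniformity _ (P.compatibilityUniformSpace y₀)).HasBasis (fun _ : ℕ ↦ True)
      fun N ↦ {q | P.CompatibleWithin N q.1.val q.2.val} :=
  ⟨fun t ↦ (FilterBasis.mem_filter_iff _).trans (by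
    simp only [compatibilityBasis, ← FilterBasis.mem_sets, exists_range_iff, true_and])⟩

noncomputable instance : PseudoMetricSpace (P.Basin y₀) :=
  letI := P.compatibilityUniformSpace y₀
  haveI := (P.hasBasis_uniformity_compatibilityUniformSpace (y₀ := y₀)).isCountablyGenerated
  UniformSpace.pseudoMetricSpace _

variable {P}

theorem Basin.hasBasis_uniformity : (uniformity (P.Basin y₀)).HasBasis (fun _ : ℕ ↦ True)
    fun N ↦ {q | P.CompatibleWithin N q.1.val q.2.val} :=
  P.hasBasis_uniformity_compatibilityUniformSpace

theorem Basin.totallyBounded_univ : TotallyBounded (univ : Set (P.Basin y₀)) := by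
  refine (Basin.hasBasis_uniformity).totallyBounded_iff.2 fun N _ ↦ ?_
  obtain ⟨colour, h_colour⟩ := P.exists_finite_colouring_compatibleWithin N
  let g (y : P.Basin y₀) := colour y.val
  refine ⟨range (rangeSplitting g), finite_range _, fun y _ ↦ mem_iUnion₂.2
    ⟨_, mem_range_self ⟨g y, mem_range_self y⟩, h_colour _ _ ?_⟩⟩
  exact (apply_rangeSplitting g ⟨g y, mem_range_self y⟩).symm

variable (P y₀) in
/-- The restriction of `f` to the basin. -/
def basinEquiv : Equiv.Perm (P.Basin y₀) where
  toFun y := ⟨f y.val, by simpa only [zpow_one] using zpow_mem_alphaBasin y.mem 1⟩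
  invFun y := ⟨f.symm y.val, by
    simpa only [zpow_neg_one, Equiv.Perm.inv_def] using zpow_mem_alphaBasin y.mem (-1)⟩
  left_inv y := Basin.ext (f.symm_apply_apply y.val)
  right_inv y := Basin.ext (f.apply_symm_apply y.val)

theorem Basin.val_zpow (n : ℤ) (y : P.Basin y₀) :
    ((P.basinEquiv y₀ ^ n) y).val = (f ^ n) y.val :=
  semiconj_zpow (π := Basin.val) (F := P.basinEquiv y₀) (fun _ ↦ rfl) n y

theorem Basin.uniformContinuous_zpow (n : ℤ) :
    UniformContinuous (P.basinEquiv y₀ ^ n : Equiv.Perm _) :=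
  (Basin.hasBasis_uniformity.uniformContinuous_iff Basin.hasBasis_uniformity).2 fun N _ ↦
    ⟨N + n.natAbs, trivial, fun y y' h ↦ by
      simpa only [mem_ofPred_eq, Basin.val_zpow] using CompatibleWithin.zpow n h⟩

variable (P y₀) in
/-- The restriction of `f` to the basin, as an automorphism of the compatibility uniformity. -/
def basinUniformEquiv : P.Basin y₀ ≃ᵤ P.Basin y₀ where
  __ := P.basinEquiv y₀
  uniformContinuous_toFun := zpow_one (P.basinEquiv y₀) ▸ Basin.uniformContinuous_zpow 1
  uniformContinuous_invFun := show UniformContinuous ⇑(P.basinEquiv y₀)⁻¹ from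
    zpow_neg_one (P.basinEquiv y₀) ▸ Basin.uniformContinuous_zpow (-1)

theorem Basin.uniformContinuous_val : UniformContinuous (Basin.val : P.Basin y₀ → Y) := by
  refine (Basin.hasBasis_uniformity.uniformContinuous_iff Metric.uniformity_basis_dist).2
    fun η hη ↦ ?_
  obtain ⟨J, hJ⟩ := P.separates η hη
  exact ⟨0 + J, trivial, fun y y' h ↦ CompatibleWithin.dist_lt (k := 0) hJ h (by simp)⟩

theorem FiberStable.isInducing_basinVal (hy₀ : P.FiberStable y₀) (hf : Continuous f)
    (hf' : Continuous f.symm) : IsInducing (Basin.val : P.Basin y₀ → Y) := by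
  refine isInducing_iff_nhds.2 fun y ↦ le_antisymm
    Basin.uniformContinuous_val.continuous.continuousAt.tendsto.le_comap ?_
  refine (nhds_basis_uniformity' Basin.hasBasis_uniformity).ge_iff.2 fun N _ ↦ ?_
  exact preimage_mem_comap (hy₀.eventually_compatibleWithin hf hf' y.mem N)

theorem Basin.denseRange_val [BaireSpace Y] (hf : Continuous f) (hf' : Continuous f.symm)
    (htrans : TopTransitive f) : DenseRange (Basin.val : P.Basin y₀ → Y) :=
  (dense_of_mem_residual (htrans.alphaBasin_mem_residual hf hf' y₀)).mono
    fun y hy ↦ ⟨⟨y, hy⟩, rfl⟩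

end BasinUniformity

section Extension

variable {P} {y₀ : Y}

variable (P y₀) in
/-- The Smale space extending `(Y, f)`: the completion of the basin. -/
abbrev Extension : Type _ := UniformSpace.Completion (P.Basin y₀)

instance : CompactSpace (P.Extension y₀) := by
  refine isCompact_univ_iff.1 (TotallyBounded.isCompact_of_isClosed ?_ isClosed_univ)
  rw [← UniformSpace.Completion.denseRange_coe.closure_range, ← image_univ]
  exact (Basin.totallyBounded_univ.image (UniformSpace.Completion.uniformContinuous_coe _)).closure

namespace Extension

variable (P y₀) in
/-- The continuous extension of `f` from the basin to its completion. -/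
noncomputable def map : Equiv.Perm (P.Extension y₀) :=
  (UniformSpace.Completion.mapEquiv (P.basinUniformEquiv y₀)).toEquiv

theorem continuous_map : Continuous (map P y₀) :=
  (UniformSpace.Completion.mapEquiv _).continuous

theorem continuous_map_symm : Continuous (map P y₀).symm :=
  (UniformSpace.Completion.mapEquiv _).symm.continuous

theorem semiconj_coe : Function.Semiconj ((↑) : P.Basin y₀ → P.Extension y₀) (P.basinEquiv y₀)
    (map P y₀) :=
  fun y ↦ (UniformSpace.Completion.mapEquiv_coe (P.basinUniformEquiv y₀) y).symm

theorem map_zpow_coe (n : ℤ) (y : P.Basin y₀) :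
    (map P y₀ ^ n) y = ((P.basinEquiv y₀ ^ n) y : P.Basin y₀) :=
  (semiconj_zpow (f := map P y₀) semiconj_coe n y).symm

theorem dist_map_zpow_coe (n : ℤ) (y y' : P.Basin y₀) :
    dist ((map P y₀ ^ n) y) ((map P y₀ ^ n) y') =
      dist ((P.basinEquiv y₀ ^ n) y) ((P.basinEquiv y₀ ^ n) y') := by
  rw [map_zpow_coe, map_zpow_coe, UniformSpace.Completion.dist_eq]

variable (P y₀) in
/-- The continuous extension to the completion of the inclusion of the basin in `Y`. -/
noncomputable def proj : P.Extension y₀ → Y :=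
  UniformSpace.Completion.extension Basin.val

theorem proj_coe (y : P.Basin y₀) : proj P y₀ y = y.val :=
  UniformSpace.Completion.extension_coe Basin.uniformContinuous_val y

theorem proj_comp_coe : proj P y₀ ∘ ((↑) : P.Basin y₀ → P.Extension y₀) = Basin.val :=
  funext proj_coe

theorem continuous_proj [CompleteSpace Y] : Continuous (proj P y₀) :=
  UniformSpace.Completion.continuous_extension

theorem semiconj_proj [CompleteSpace Y] (hf : Continuous f) :
    Function.Semiconj (proj P y₀) (map P y₀) f := fun x ↦ by
  induction x using UniformSpace.Completion.induction_on with
  | hp => exact isClosed_eq (continuous_proj.comp continuous_map) (hf.comp continuous_proj)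
  | ih y => rw [← semiconj_coe y, proj_coe, proj_coe]; rfl

theorem exists_forall_compatibleWithin_dist_le {ε : ℝ} (hε : 0 < ε) :
    ∃ N : ℕ, ∀ (y y' : P.Basin y₀) (n : ℤ), P.CompatibleWithin N ((f ^ n) y.val) ((f ^ n) y'.val) →
      dist ((map P y₀ ^ n) y) ((map P y₀ ^ n) y') ≤ ε := by
  obtain ⟨N, -, hN⟩ :=
    (Basin.hasBasis_uniformity (P := P)).mem_iff.1 (Metric.dist_mem_uniformity hε)
  refine ⟨N, fun y y' n h ↦ ?_⟩
  rw [dist_map_zpow_coe]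
  exact (hN (a := (_, _)) (by simpa only [mem_ofPred_eq, Basin.val_zpow] using h)).le

theorem exists_forall_dist_lt_compatibleWithin (N : ℕ) :
    ∃ δ > 0, ∀ (y y' : P.Basin y₀) (n : ℤ),
      dist ((map P y₀ ^ n) y) ((map P y₀ ^ n) y') < δ →
        P.CompatibleWithin N ((f ^ n) y.val) ((f ^ n) y'.val) := by
  obtain ⟨δ, hδ, h_sub⟩ := Metric.mem_uniformity_dist.1
    ((Basin.hasBasis_uniformity (P := P) (y₀ := y₀)).mem_of_mem (i := N) trivial)
  refine ⟨δ, hδ, fun y y' n h ↦ ?_⟩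
  rw [dist_map_zpow_coe] at h
  simpa only [mem_ofPred_eq, Basin.val_zpow] using h_sub h

theorem exists_expansive : ∃ c > 0, Expansive (map P y₀) c := by
  obtain ⟨δ, hδ, h_compat⟩ := exists_forall_dist_lt_compatibleWithin (P := P) (y₀ := y₀) 0
  refine ⟨δ / 2, half_pos hδ, expansive_of_denseRange UniformSpace.Completion.denseRange_coe
    continuous_map continuous_map_symm (fun ε hε ↦ ?_) (half_lt_self hδ)⟩
  obtain ⟨N, hN⟩ := exists_forall_compatibleWithin_dist_le (P := P) (y₀ := y₀) hε
  exact ⟨N, fun y y' h ↦ hN y y' 0 fun m hm ↦ h_compat y y' m (h m hm) 0 (by simp)⟩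

theorem canonicalCoords : CanonicalCoords (map P y₀) := by
  obtain ⟨c, hc, hexp⟩ := exists_expansive (P := P) (y₀ := y₀)
  refine canonicalCoords_of_denseRange UniformSpace.Completion.denseRange_coe continuous_map
    continuous_map_symm hc hexp fun ε hε ↦ ?_
  obtain ⟨N, hN⟩ := exists_forall_compatibleWithin_dist_le (P := P) (y₀ := y₀) hε
  obtain ⟨δ, hδ, h_compat⟩ :=
    exists_forall_dist_lt_compatibleWithin (P := P) (y₀ := y₀) (N + 4 * P.window)
  refine ⟨δ, hδ, fun y y' hyy' ↦ ?_⟩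
  have h_near : P.CompatibleWithin (N + 4 * P.window) y.val y'.val := h_compat y y' 0 hyy'
  obtain ⟨z, hy'z, hyz⟩ := h_near.exists_bracket
  have hz : z ∈ alphaBasin f y₀ := mem_alphaBasin_of_forall_le P.separates y'.mem fun k hk ↦ by
    linarith [(hy'z k (by omega)).dist_le, P.scale_pos]
  refine ⟨(⟨z, hz⟩ : P.Basin y₀), fun n ↦ ⟨hN _ _ n ?_, hN _ _ (-n) ?_⟩⟩ <;>
    rintro m ⟨hm, hm'⟩ <;> simp only [zpow_apply_zpow_apply]
  · exact hyz (m + n) (by omega)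
  · exact hy'z (m + -n) (by omega)

theorem isSmale : IsSmale (map P y₀) :=
  ⟨continuous_map, continuous_map_symm, exists_expansive, canonicalCoords⟩

theorem uResolving_proj [CompleteSpace Y] (hf : Continuous f) :
    UResolving (map P y₀) (proj P y₀) := by
  obtain ⟨c, hc, hexp⟩ := exists_expansive (P := P) (y₀ := y₀)
  obtain ⟨N, hN⟩ := exists_forall_compatibleWithin_dist_le (P := P) (y₀ := y₀) hc
  obtain ⟨δ, hδ, h_compat⟩ :=
    exists_forall_dist_lt_compatibleWithin (P := P) (y₀ := y₀) (N + P.window)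
  refine hexp.uResolving (semiconj_proj hf) ⟨δ, hδ, fun x x' ↦ forward_dist_le_of_denseRange
    UniformSpace.Completion.denseRange_coe continuous_map continuous_map_symm continuous_proj
    P.scale_pos (L := N) (fun y y' n hyy' h_near ↦ hN y y' n ?_) (semiconj_proj hf)⟩
  have h_start : P.CompatibleWithin (N + P.window) y.val y'.val := h_compat y y' 0 hyy'
  rintro m ⟨hm, hm'⟩
  simp only [zpow_apply_zpow_apply]
  refine (h_start (-(N + P.window : ℕ)) ⟨le_rfl, by omega⟩).propagate (by omega)
    fun k ⟨hk, hk'⟩ ↦ ?_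
  rcases le_total k 0 with hk0 | hk0
  · exact (h_start k ⟨hk, by omega⟩).dist_le
  · have h_k := h_near k ⟨hk0, by omega⟩
    rw [semiconj_zpow (semiconj_proj hf), semiconj_zpow (semiconj_proj hf), proj_coe,
      proj_coe] at h_k
    exact h_k.le

variable [CompleteSpace Y]

theorem surjective_proj (hf : Continuous f) (hf' : Continuous f.symm) (htrans : TopTransitive f) :
    Function.Surjective (proj P y₀) := by
  have h_dense : DenseRange (proj P y₀) :=
    .of_comp (proj_comp_coe (P := P) ▸ Basin.denseRange_val hf hf' htrans)
  rw [← range_eq_univ, ← (isCompact_range continuous_proj).isClosed.closure_eq]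
  exact h_dense.closure_range

theorem isFactorMap_proj (hf : Continuous f) (hf' : Continuous f.symm) (htrans : TopTransitive f) :
    IsFactorMap (map P y₀) f (proj P y₀) :=
  ⟨continuous_proj, surjective_proj hf hf' htrans, semiconj_proj hf⟩

theorem topTransitive_map (hy₀ : P.FiberStable y₀) (hf : Continuous f) (hf' : Continuous f.symm)
    (htrans : TopTransitive f) : TopTransitive (map P y₀) :=
  topTransitive_of_isInducing hf hf' htrans UniformSpace.Completion.denseRange_coe
    (UniformSpace.Completion.continuous_coe _) (hy₀.isInducing_basinVal hf hf')
    (Basin.denseRange_val hf hf' htrans) (g := P.basinEquiv y₀) (fun _ ↦ rfl) semiconj_coe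

theorem existsUnique_proj_eq (hy₀ : P.FiberStable y₀) (hf : Continuous f)
    (hf' : Continuous f.symm) {y : Y} (hy : y ∈ alphaBasin f y₀) :
    ∃! x, proj P y₀ x = y := by
  refine ⟨(⟨y, hy⟩ : P.Basin y₀), proj_coe _, fun x hx ↦ ?_⟩
  refine eq_of_isInducing_of_denseRange UniformSpace.Completion.denseRange_coe
    (UniformSpace.Completion.continuous_coe _) continuous_proj ?_ (hx.trans (proj_coe ⟨y, hy⟩).symm)
  exact proj_comp_coe (P := P) ▸ hy₀.isInducing_basinVal hf hf'

end Extension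

end Extension

end CellPresentation

section Subshift

variable {A : Type*} {S : Set (ℤ → A)}

theorem shiftE_zpow_apply (n : ℤ) (x : ℤ → A) (i : ℤ) : (shiftE A ^ n) x i = x (i + n) := by
  induction n generalizing x with
  | zero => rw [zpow_zero, Equiv.Perm.one_apply, add_zero]
  | succ n ih =>
    rw [zpow_add_one, Equiv.Perm.mul_apply, ih, ← add_assoc]
    rfl
  | pred n ih =>
    rw [zpow_sub_one, Equiv.Perm.mul_apply, ih, ← add_sub_assoc]
    rfl

theorem IsSFT.isClosed [TopologicalSpace A] [DiscreteTopology A] (hS : IsSFT S) : IsClosed S := by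
  obtain ⟨Fw, -, rfl⟩ := hS
  simp only [OccursIn, not_exists, ofPred_forall]
  refine isClosed_biInter fun w _ ↦ isClosed_iInter fun i ↦ isOpen_compl_iff.1 ?_
  simp only [compl_ofPred, not_not, ofPred_forall]
  exact isOpen_iInter_of_finite fun j ↦
    (continuous_apply (A := fun _ : ℤ ↦ A) (i + j)).isOpen_preimage _ (isOpen_discrete {w.2 j})

theorem IsSFT.exists_splice (hS : IsSFT S) : ∃ L : ℕ, ∀ M ≥ L, ∀ x ∈ S, ∀ y ∈ S,
    EqOn x y (Icc (-M : ℤ) M) → ∃ z ∈ S, EqOn z x (Iic (M : ℤ)) ∧ EqOn z y (Ici (-M : ℤ)) := by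
  classical
  obtain ⟨Fw, h_fin, rfl⟩ := hS
  obtain ⟨L, hL⟩ := (h_fin.image Sigma.fst).bddAbove
  refine ⟨L, fun M hM x hx y hy hxy ↦ ?_⟩
  let z := (Iic (0 : ℤ)).piecewise x y
  have hzx : EqOn z x (Iic (M : ℤ)) := fun j hj ↦ by
    rcases le_or_gt j 0 with h0 | h0
    · exact piecewise_eq_of_mem (Iic 0) x y h0
    · exact (piecewise_eq_of_notMem (Iic 0) x y h0.not_ge).trans (hxy ⟨by omega, hj⟩).symm
  have hzy : EqOn z y (Ici (-M : ℤ)) := fun j hj ↦ by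
    rcases le_or_gt j 0 with h0 | h0
    · exact (piecewise_eq_of_mem (Iic 0) x y h0).trans (hxy ⟨hj, by omega⟩)
    · exact piecewise_eq_of_notMem (Iic 0) x y h0.not_ge
  refine ⟨z, ?_, hzx, hzy⟩
  rintro w hw ⟨i, hi⟩
  have h_length : w.1 ≤ L := hL (mem_image_of_mem _ hw)
  rcases le_total i 0 with h0 | h0
  · refine hx w hw ⟨i, fun j ↦ (hzx ?_).symm.trans (hi j)⟩
    rw [mem_Iic]
    omega
  · refine hy w hw ⟨i, fun j ↦ (hzy ?_).symm.trans (hi j)⟩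
    rw [mem_Ici]
    omega

theorem exists_forall_eqOn_Icc_dist_lt [TopologicalSpace A] [T2Space A] {Y : Type*}
    [PseudoMetricSpace Y] {φ : (ℤ → A) → Y} (hS : IsCompact S) (hφ : ContinuousOn φ S) {r : ℝ}
    (hr : 0 < r) : ∃ L : ℕ, ∀ x ∈ S, ∀ y ∈ S, EqOn x y (Icc (-L : ℤ) L) → dist (φ x) (φ y) < r := by
  have := isCompact_iff_compactSpace.1 hS
  let V (L : ℕ) : Set (S × S) := {q | EqOn q.1.1 q.2.1 (Icc (-L : ℤ) L)}
  have hV_anti : Antitone V := fun m n hmn q hq ↦ hq.mono (Icc_subset_Icc (by omega) (by omega))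
  have h_coord (l : ℤ) : Continuous fun s : S ↦ s.1 l :=
    (continuous_apply l).comp continuous_subtype_val
  have hV_closed : ∀ L, IsClosed (V L) := fun L ↦ by
    simp only [V, EqOn, ofPred_forall]
    exact isClosed_biInter fun l _ ↦
      isClosed_eq ((h_coord l).comp continuous_fst) ((h_coord l).comp continuous_snd)
  have h_open : IsOpen {q : S × S | dist (φ q.1) (φ q.2) < r} :=
    isOpen_lt ((hφ.domRestrict.comp continuous_fst).dist (hφ.domRestrict.comp continuous_snd))
      continuous_const
  have hV_diag : ∀ q ∈ ⋂ L, V L, {q : S × S | dist (φ q.1) (φ q.2) < r} ∈ 𝓝 q := fun q hq ↦ by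
    have h_eq : q.1.1 = q.2.1 :=
      funext fun l ↦ mem_iInter.1 hq l.natAbs (by rw [mem_Icc]; omega)
    exact h_open.mem_nhds (by simpa [h_eq] using hr)
  obtain ⟨L, hL⟩ := exists_subset_nhds_of_compactSpace hV_anti.directed_ge hV_closed hV_diag
  exact ⟨L, fun x hx y hy hxy ↦ hL (a := (⟨x, hx⟩, ⟨y, hy⟩)) hxy⟩

/-- The shift map on a shift-invariant set. -/
def ShiftInvariant.subshift (hS : ShiftInvariant S) : Equiv.Perm S :=
  (shiftE A).subtypePerm fun x ↦
    ⟨fun hx ↦ (shiftE A).symm_apply_apply x ▸ hS.2 _ hx, hS.1 x⟩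

theorem ShiftInvariant.subshift_zpow_apply (hS : ShiftInvariant S) (n : ℤ) (s : S) (i : ℤ) :
    ((hS.subshift ^ n) s).1 i = s.1 (i + n) := by
  rw [semiconj_zpow (π := Subtype.val) (F := hS.subshift) (f := shiftE A) (fun _ ↦ rfl) n s,
    shiftE_zpow_apply]

theorem exists_cellPresentation_of_isSubshiftFactorMap.{u, v} {A : Type v} {S : Set (ℤ → A)}
    [Finite A] [TopologicalSpace A] [DiscreteTopology A] {Y : Type u} [MetricSpace Y]
    {f : Equiv.Perm Y} {φ : (ℤ → A) → Y}
    (hS : IsSFT S) (hS_inv : ShiftInvariant S) (hφ : IsSubshiftFactorMap S f φ) {r : ℝ}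
    (hr : 0 < r) (hf : ∀ η > 0, ∃ J, SeparatesWithin f (4 * r) η J) :
    Nonempty (CellPresentation.{u, v} f) := by
  obtain ⟨hφ_cont, hφ_surj, hφ_semi⟩ := hφ
  obtain ⟨L, h_splice⟩ := hS.exists_splice
  obtain ⟨L', h_small⟩ := exists_forall_eqOn_Icc_dist_lt hS.isClosed.isCompact hφ_cont hr
  let M := max L L'
  let cell (s : S) : Icc (-M : ℤ) M → A := (Icc (-M : ℤ) M).domRestrict s.1
  have := isCompact_iff_compactSpace.1 hS.isClosed.isCompact
  refine ⟨{
    Point := S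
    Cell := Icc (-M : ℤ) M → A
    finite_cell := inferInstance
    shift := hS_inv.subshift
    cell := cell
    proj := S.domRestrict φ
    semiconj := fun s ↦ hφ_semi s s.2
    surjective := range_eq_univ.1 ((range_domRestrict φ S).trans hφ_surj)
    splice := fun s u h ↦ ?_
    scale := r
    scale_pos := hr
    dist_le := fun s u h ↦ (h_small s s.2 u u.2 ?_).le
    isClosed_cell := fun a ↦ ?_
    separates := hf }⟩
  · obtain ⟨z, hz, hzs, hzu⟩ :=
      h_splice M (le_max_left L L') s s.2 u u.2 (domRestrict_eq_domRestrict_iff.1 h)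
    refine ⟨⟨z, hz⟩, fun k hk ↦ funext fun ⟨j, hj⟩ ↦ ?_, fun k hk ↦ funext fun ⟨j, hj⟩ ↦ ?_⟩ <;>
      simp only [cell, domRestrict_apply, hS_inv.subshift_zpow_apply]
    · exact hzs (by have := hj.2; rw [mem_Iic]; omega)
    · exact hzu (by have := hj.1; rw [mem_Ici]; omega)
  · exact (domRestrict_eq_domRestrict_iff.1 h).mono (Icc_subset_Icc (by omega) (by omega))
  · have h_closed : IsClosed (cell ⁻¹' {a}) :=
      (isClosed_discrete {a}).preimage (by simp only [cell]; fun_prop)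
    exact (h_closed.isCompact.image hφ_cont.domRestrict).isClosed

end Subshift

theorem FinitelyPresented.exists_cellPresentation.{u} {Y : Type u} [MetricSpace Y]
    [CompactSpace Y] {f : Equiv.Perm Y} (h : FinitelyPresented f) :
    Nonempty (CellPresentation.{u, 0} f) := by
  obtain ⟨hf, hf', ⟨c, hc, hexp⟩, N, S, hS, hS_inv, -, φ, hφ⟩ := h
  refine exists_cellPresentation_of_isSubshiftFactorMap hS hS_inv hφ (r := c / 4) (by positivity)
    fun η hη ↦ ?_
  rw [mul_div_cancel₀ c four_ne_zero]
  exact hexp.exists_separatesWithin hf hf' hη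

theorem FinitelyPresented.nonempty {Y : Type*} [MetricSpace Y] {f : Equiv.Perm Y}
    (h : FinitelyPresented f) : Nonempty Y :=
  let ⟨_, _, _, _, _, _, _, ⟨s, _⟩, φ, _⟩ := h
  ⟨φ s⟩

/-- Every transitive finitely presented system has a transitive Smale space
extension with a u-resolving factor map that is one-to-one on a residual set. -/
theorem stmt6 {Y : Type} [MetricSpace Y] [CompactSpace Y] (f : Equiv.Perm Y)
    (hY : FinitelyPresented f) (hYt : TopTransitive f) :
    ∃ (X : Type) (mX : MetricSpace X) (cX : CompactSpace X) (F : Equiv.Perm X),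
      IsSmale F ∧ TopTransitive F ∧
      ∃ π : X → Y, IsFactorMap F f π ∧ UResolving F π ∧
        ∃ R ∈ residual Y, ∀ y ∈ R, ∃! x : X, π x = y := by
  obtain ⟨P⟩ := hY.exists_cellPresentation
  have := hY.nonempty
  obtain ⟨hf, hf', -⟩ := hY
  obtain ⟨y₀, hy₀⟩ := P.exists_fiberStable
  open CellPresentation.Extension in
  exact ⟨P.Extension y₀, inferInstance, inferInstance, map P y₀, isSmale,
    topTransitive_map hy₀ hf hf' hYt, proj P y₀, isFactorMap_proj hf hf' hYt, uResolving_proj hf,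
    alphaBasin f y₀, hYt.alphaBasin_mem_residual hf hf' y₀,
    fun y hy ↦ existsUnique_proj_eq hy₀ hf hf' hy⟩
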